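/- Let n ≥ 3 and let u : ℝⁿ \ {0} → ℝⁿ be a smooth (-1)-homogeneous vector field (λ u(λx) = u(x) for all λ > 0, x ≠ 0) with div u = 0 pointwise on ℝⁿ \ {0}. Then u is divergence-free across the origin in the sense of distributions: for every smooth compactly supported function ψ : ℝⁿ → ℝ one has ∫_{ℝⁿ} u·∇ψ dx = 0 (the integral being absolutely convergent since |u(x)| ≤ C/|x|). -/

import Mathlib

/-!
Let `η` be smooth, equal to `0` near the origin and to `1` away from it, and put `η_c(x) = η(c x)`.
The field `η_c u` is smooth on the whole space and `div (η_c u) = u · ∇η_c`, so integration by parts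
(`integral_cutoff_mul`) gives `∫ η_c u · ∇ψ = -∫ ψ u · ∇η_c`. By homogeneity the right-hand
integrand is `c² ψ(x) g(c x)` with `g = u · ∇η` continuous and compactly supported, so rescaling
bounds the integral by a constant times `c^(2 - n)`, which tends to `0` as `c → ∞` because `n ≥ 3`.
The left-hand side tends to `∫ u · ∇ψ` by dominated convergence.
-/

noncomputable section

open MeasureTheory

/-- Partial derivative in the `j`-th coordinate direction. -/
def pd (n : ℕ) (f : (Fin n → ℝ) → ℝ) (j : Fin n) (x : Fin n → ℝ) : ℝ :=
  fderiv ℝ f x (Pi.single j 1)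

/-- A function smooth off the origin becomes smooth everywhere after multiplication by a smooth
function vanishing near the origin. -/
theorem contDiff_mul_of_vanish {n : ℕ} {φ f : (Fin n → ℝ) → ℝ} (hφ : ContDiff ℝ (⊤ : ℕ∞) φ)
    (hφ0 : ∀ᶠ x in nhds 0, φ x = 0) (hf : ContDiffOn ℝ (⊤ : ℕ∞) f {x | x ≠ 0}) :
    ContDiff ℝ (⊤ : ℕ∞) (fun x => φ x * f x) := by
  rw [contDiff_iff_contDiffAt]
  intro x
  by_cases hx : x = 0
  · subst hx
    refine (contDiffAt_const (c := (0 : ℝ))).congr_of_eventuallyEq ?_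
    filter_upwards [hφ0] with y hy
    simp [hy]
  · exact hφ.contDiffAt.mul (hf.contDiffAt (isOpen_ne.mem_nhds hx))

theorem contDiff_pd {n : ℕ} {f : (Fin n → ℝ) → ℝ} (hf : ContDiff ℝ (⊤ : ℕ∞) f) (i : Fin n) :
    ContDiff ℝ (⊤ : ℕ∞) (pd n f i) :=
  (hf.fderiv_right (m := (⊤ : ℕ∞)) (by simp)).clm_apply contDiff_const

theorem pd_eventually_zero {n : ℕ} {f : (Fin n → ℝ) → ℝ} (hf : ∀ᶠ x in nhds 0, f x = 0)
    (i : Fin n) : ∀ᶠ x in nhds 0, pd n f i x = 0 := by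
  filter_upwards [hf.eventually_nhds] with x hx
  have h : f =ᶠ[nhds x] fun _ => (0 : ℝ) := hx
  simp [pd, h.fderiv_eq]

theorem hasCompactSupport_pd {n : ℕ} {f : (Fin n → ℝ) → ℝ} (hf : HasCompactSupport f)
    (i : Fin n) : HasCompactSupport (pd n f i) :=
  hf.fderiv_apply ℝ _

/-- Integration by parts for the cut-off field `φ u`, whose divergence is `u · ∇φ`. -/
theorem integral_cutoff_mul {n : ℕ} {u : (Fin n → ℝ) → Fin n → ℝ}
    (hu : ContDiffOn ℝ (⊤ : ℕ∞) u {x | x ≠ 0})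
    (hdiv : ∀ x : Fin n → ℝ, x ≠ 0 → ∑ i, pd n (fun y => u y i) i x = 0)
    {φ ψ : (Fin n → ℝ) → ℝ} (hφ : ContDiff ℝ (⊤ : ℕ∞) φ) (hφ0 : ∀ᶠ x in nhds 0, φ x = 0)
    (hψ : ContDiff ℝ (⊤ : ℕ∞) ψ) (hψc : HasCompactSupport ψ) :
    ∫ x, φ x * ∑ i, u x i * pd n ψ i x = - ∫ x, ψ x * ∑ i, u x i * pd n φ i x := by
  have hui : ∀ i, ContDiffOn ℝ (⊤ : ℕ∞) (fun x => u x i) {x | x ≠ 0} := contDiffOn_pi.1 hu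
  have hw : ∀ i, ContDiff ℝ (⊤ : ℕ∞) (fun x => φ x * u x i) := fun i =>
    contDiff_mul_of_vanish hφ hφ0 (hui i)
  have hint1 : ∀ i, Integrable (fun x => (φ x * u x i) * pd n ψ i x) := fun i =>
    ((hw i).continuous.mul (contDiff_pd hψ i).continuous).integrable_of_hasCompactSupport
      (hasCompactSupport_pd hψc i).mul_left
  have hint2 : ∀ i, Integrable (fun x => pd n (fun x => φ x * u x i) i x * ψ x) := fun i =>
    ((contDiff_pd (hw i) i).continuous.mul hψ.continuous).integrable_of_hasCompactSupport
      hψc.mul_left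
  have hint3 : ∀ i, Integrable (fun x => (φ x * u x i) * ψ x) := fun i =>
    ((hw i).continuous.mul hψ.continuous).integrable_of_hasCompactSupport hψc.mul_left
  have key : ∀ i, ∫ x, (φ x * u x i) * pd n ψ i x
      = - ∫ x, pd n (fun x => φ x * u x i) i x * ψ x := fun i =>
    integral_mul_fderiv_eq_neg_fderiv_mul_of_integrable (hint2 i) (hint1 i) (hint3 i)
      (fun x _ => (hw i).differentiable (by simp) x)
      (fun x _ => hψ.differentiable (by simp) x)
  have hdivw : ∀ x, ∑ i, pd n (fun x => φ x * u x i) i x = ∑ i, u x i * pd n φ i x := by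
    intro x
    by_cases hx : x = 0
    · subst hx
      refine Finset.sum_congr rfl fun i _ => ?_
      have h0 : ∀ᶠ x in nhds 0, φ x * u x i = 0 := by
        filter_upwards [hφ0] with y hy
        simp [hy]
      rw [(pd_eventually_zero h0 i).self_of_nhds, (pd_eventually_zero hφ0 i).self_of_nhds,
        mul_zero]
    · have h : ∀ i, pd n (fun x => φ x * u x i) i x
          = φ x * pd n (fun y => u y i) i x + u x i * pd n φ i x := by
        intro i
        have hd : DifferentiableAt ℝ (fun y => u y i) x :=
          ((hui i).contDiffAt (isOpen_ne.mem_nhds hx)).differentiableAt (by simp)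
        simp only [pd]
        rw [fderiv_fun_mul (hφ.differentiable (by simp) x) hd]
        simp
      simp only [h, Finset.sum_add_distrib, ← Finset.mul_sum, hdiv x hx, mul_zero, zero_add]
  calc ∫ x, φ x * ∑ i, u x i * pd n ψ i x
      = ∫ x, ∑ i, (φ x * u x i) * pd n ψ i x := by
        simp only [Finset.mul_sum, mul_assoc]
    _ = ∑ i, - ∫ x, pd n (fun x => φ x * u x i) i x * ψ x := by
        rw [integral_finsetSum _ fun i _ => hint1 i]
        exact Finset.sum_congr rfl fun i _ => key i
    _ = - ∫ x, ψ x * ∑ i, u x i * pd n φ i x := by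
        rw [Finset.sum_neg_distrib, ← integral_finsetSum _ fun i _ => hint2 i]
        simp only [← Finset.sum_mul, hdivw, mul_comm (ψ _)]

theorem pd_comp_smul {n : ℕ} (f : (Fin n → ℝ) → ℝ) (c : ℝ) (i : Fin n) (x : Fin n → ℝ) :
    pd n (fun y => f (c • y)) i x = c * pd n f i (c • x) := by
  simp only [pd]
  rw [fderiv_comp_smul]
  simp

/-- A smooth function with values in `[0, 1]`, zero near the origin and one at distance at least
`2` from it. -/
theorem exists_cutoff (n : ℕ) : ∃ η : (Fin n → ℝ) → ℝ, ContDiff ℝ (⊤ : ℕ∞) η ∧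
    (∀ᶠ x in nhds 0, η x = 0) ∧ (∀ x, 2 ≤ ‖x‖ → η x = 1) ∧ (∀ x, |η x| ≤ 1) ∧
    ∀ i, HasCompactSupport (pd n η i) := by
  let b : ContDiffBump (0 : Fin n → ℝ) := ⟨1, 2, one_pos, one_lt_two⟩
  refine ⟨fun x => 1 - b x, contDiff_const.sub b.contDiff, ?_, ?_, ?_, ?_⟩
  · filter_upwards [b.eventuallyEq_one] with x hx
    simp [hx]
  · intro x hx
    have : b x = 0 := b.zero_of_le_dist (by simpa using hx)
    simp [this]
  · intro x
    rw [abs_le]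
    constructor <;> linarith [b.nonneg (x := x), b.le_one (x := x)]
  · intro i
    have h : pd n (fun x => 1 - b x) i = - pd n b i := by
      funext x
      simp [pd, fderiv_const_sub]
    rw [h]
    exact (hasCompactSupport_pd b.hasCompactSupport i).neg

theorem div_free_across_origin
    (n : ℕ) (hn : 3 ≤ n)
    (u : (Fin n → ℝ) → Fin n → ℝ)
    (hu : ContDiffOn ℝ (⊤ : ℕ∞) u {x | x ≠ 0})
    (huhom : ∀ l : ℝ, 0 < l → ∀ x : Fin n → ℝ, x ≠ 0 → l • u (l • x) = u x)
    (hdiv : ∀ x : Fin n → ℝ, x ≠ 0 → ∑ i, pd n (fun y => u y i) i x = 0) :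
    ∀ ψ : (Fin n → ℝ) → ℝ, ContDiff ℝ (⊤ : ℕ∞) ψ → HasCompactSupport ψ →
      ∫ x : Fin n → ℝ, ∑ i, u x i * pd n ψ i x = 0 := by
  intro ψ hψ hψc
  -- The Bochner integral of a non-integrable function is `0` by convention, so the `1/|x|` bound
  -- giving integrability is not needed for the equation.
  by_cases hI : Integrable (fun x : Fin n → ℝ => ∑ i, u x i * pd n ψ i x)
  swap
  · exact integral_undef hI
  have : Nonempty (Fin n) := ⟨⟨0, by omega⟩⟩
  obtain ⟨η, hη, hη0, hη1, hηle, hηc⟩ := exists_cutoff n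
  have hui : ∀ i, ContDiffOn ℝ (⊤ : ℕ∞) (fun x => u x i) {x | x ≠ 0} := contDiffOn_pi.1 hu
  let g : (Fin n → ℝ) → ℝ := fun y => ∑ i, pd n η i y * u y i
  have hg : Integrable g := integrable_finsetSum _ fun i _ =>
    (contDiff_mul_of_vanish (contDiff_pd hη i) (pd_eventually_zero hη0 i)
      (hui i)).continuous.integrable_of_hasCompactSupport (hηc i).mul_right
  obtain ⟨M, hM⟩ := hψ.continuous.bounded_above_of_compact_support hψc
  let c : ℕ → ℝ := fun k => (k : ℝ) + 1
  have hc : ∀ k, 0 < c k := fun k => by positivity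
  have hφ : ∀ k, ContDiff ℝ (⊤ : ℕ∞) (fun x => η (c k • x)) := fun k =>
    hη.comp (contDiff_const_smul (c k))
  have hφ0 : ∀ k, ∀ᶠ x in nhds 0, η (c k • x) = 0 := fun k => by
    have ht : Filter.Tendsto (fun x : Fin n → ℝ => c k • x) (nhds 0) (nhds 0) := by
      simpa using (continuous_const_smul (c k)).tendsto (0 : Fin n → ℝ)
    exact ht.eventually hη0
  have hlim : Filter.Tendsto (fun k => ∫ x, η (c k • x) * ∑ i, u x i * pd n ψ i x) Filter.atTop
      (nhds (∫ x, ∑ i, u x i * pd n ψ i x)) := by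
    refine tendsto_integral_of_dominated_convergence
      (fun x => ‖∑ i, u x i * pd n ψ i x‖) ?_ hI.norm ?_ ?_
    · exact fun k => (hφ k).continuous.aestronglyMeasurable.mul hI.aestronglyMeasurable
    · refine fun k => Filter.Eventually.of_forall fun x => ?_
      rw [norm_mul]
      exact mul_le_of_le_one_left (norm_nonneg _) (hηle _)
    · have hne : ∀ᵐ x : Fin n → ℝ, x ≠ 0 := by
        simp [ae_iff]
      filter_upwards [hne] with x hx
      refine tendsto_const_nhds.congr' ?_
      have hxp : 0 < ‖x‖ := norm_pos_iff.2 hx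
      filter_upwards [Filter.eventually_ge_atTop ⌈2 / ‖x‖⌉₊] with k hk
      rw [hη1, one_mul]
      rw [norm_smul, Real.norm_of_nonneg (hc k).le, ← div_le_iff₀ hxp]
      exact (Nat.ceil_le.1 hk).trans (by simp [c])
  have hbound : ∀ k, ‖∫ x, η (c k • x) * ∑ i, u x i * pd n ψ i x‖
      ≤ (M * ∫ y, ‖g y‖) * (1 / ((k : ℝ) + 1)) := by
    intro k
    -- `u · ∇η_c = c² (u · ∇η)(c x)`; at the origin both sides vanish because `∇η` does.
    have hscale : ∀ x, ∑ i, u x i * pd n (fun y => η (c k • y)) i x = c k ^ 2 * g (c k • x) := by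
      intro x
      simp only [g, Finset.mul_sum, pd_comp_smul]
      refine Finset.sum_congr rfl fun i _ => ?_
      by_cases hx : x = 0
      · subst hx
        simp [(pd_eventually_zero hη0 i).self_of_nhds]
      · have := congrFun (huhom (c k) (hc k) x hx) i
        rw [← this]
        simp only [Pi.smul_apply, smul_eq_mul]
        ring
    rw [integral_cutoff_mul hu hdiv (hφ k) (hφ0 k) hψ hψc, norm_neg]
    have hgk : Integrable (fun x => g (c k • x)) := hg.comp_smul (hc k).ne'
    have hM0 : 0 ≤ M := (norm_nonneg _).trans (hM 0)
    calc ‖∫ x, ψ x * ∑ i, u x i * pd n (fun y => η (c k • y)) i x‖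
        ≤ ∫ x, M * (c k ^ 2 * ‖g (c k • x)‖) := by
          refine norm_integral_le_of_norm_le ((hgk.norm.const_mul _).const_mul _)
            (Filter.Eventually.of_forall fun x => ?_)
          rw [hscale, norm_mul, norm_mul, norm_pow, Real.norm_of_nonneg (hc k).le]
          exact mul_le_mul_of_nonneg_right (hM x) (by positivity)
      _ = (M * ∫ y, ‖g y‖) * (c k ^ 2 * (c k ^ n)⁻¹) := by
          rw [integral_const_mul, integral_const_mul,
            Measure.integral_comp_smul volume (fun y => ‖g y‖) (c k)]
          simp only [Module.finrank_fin_fun, smul_eq_mul]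
          rw [abs_of_nonneg (inv_nonneg.2 (pow_nonneg (hc k).le n))]
          ring
      _ ≤ (M * ∫ y, ‖g y‖) * (1 / ((k : ℝ) + 1)) := by
          refine mul_le_mul_of_nonneg_left ?_
            (mul_nonneg hM0 (integral_nonneg fun _ => norm_nonneg _))
          have h1 : 1 ≤ c k := by simp [c]
          have h3 : c k ^ 3 ≤ c k ^ n := pow_le_pow_right₀ h1 hn
          change c k ^ 2 * (c k ^ n)⁻¹ ≤ 1 / c k
          rw [← div_eq_mul_inv, div_le_div_iff₀ (pow_pos (hc k) n) (hc k)]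
          linarith [h3, pow_succ (c k) 2]
  have hzero : Filter.Tendsto (fun k => ∫ x, η (c k • x) * ∑ i, u x i * pd n ψ i x) Filter.atTop
      (nhds 0) := by
    refine squeeze_zero_norm hbound ?_
    simpa using tendsto_one_div_add_atTop_nhds_zero_nat.const_mul (M * ∫ y, ‖g y‖)
  exact tendsto_nhds_unique hlim hzero
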